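/- arXiv:math/0608375 — 4 statements merged into one kernel-verified Lean document; each statement's English description precedes it below -/
import Mathlib

section
/- For every bounded real sequence x = (x_1, x_2, …), every n ≥ 1 and every k ≥ 1 one has |(H(D_n x))_k − (D_n(Hx))_k| ≤ 2n‖x‖_∞/k; consequently H(D_n x) − D_n(Hx) ∈ c₀, i.e. (H(D_n x))_k − (D_n(Hx))_k → 0 as k → ∞. -/
open Filter

/-- The Cesàro operator on (1-indexed) sequences: `(H x)_k = (x_1 + ⋯ + x_k)/k`. -/
noncomputable def cesaroSeq (x : ℕ → ℝ) : ℕ → ℝ :=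
  fun k => (∑ i ∈ Finset.Icc 1 k, x i) / k

/-- The dilation operator on (1-indexed) sequences: `(D_n x)_k = x_{⌈k/n⌉}`,
i.e. each entry of `x` is repeated `n` consecutive times. -/
def dilSeq (n : ℕ) (x : ℕ → ℝ) : ℕ → ℝ := fun k => x ((k + n - 1) / n)

/-!
Write `m = ⌈k/n⌉`. The first `k` entries of `D_n x` fall short of the full blocks of
`x_1, …, x_m` by `nm - k` copies of `x_m`, so `k (H (D_n x))_k = nm (H x)_m - (nm - k) x_m`.
Hence the commutator at `k` is exactly `((nm - k) / k) ((H x)_m - x_m)`, where `nm - k ≤ n` and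
`|(H x)_m - x_m| ≤ 2 ‖x‖_∞`.
-/

section CeilDiv

variable {n k : ℕ}

theorem mul_ceilDiv_le_add : n * (k ⌈/⌉ n) ≤ k + n := by
  rw [Nat.ceilDiv_eq_add_pred_div]
  exact (Nat.mul_div_le _ _).trans (Nat.sub_le _ _)

theorem ceilDiv_pos_of_pos (hn : 0 < n) (hk : 0 < k) : 0 < k ⌈/⌉ n :=
  pos_of_mul_pos_right (hk.trans_le (le_smul_ceilDiv hn)) n.zero_le

theorem succ_ceilDiv_of_lt_mul_ceilDiv (hn : 0 < n) (h : k < n * (k ⌈/⌉ n)) :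
    (k + 1) ⌈/⌉ n = k ⌈/⌉ n :=
  le_antisymm ((ceilDiv_le_iff_le_mul hn).2 h)
    ((gc_mul_ceilDiv hn).monotone_l k.le_succ)

theorem mul_add_one_ceilDiv (hn : 0 < n) (m : ℕ) : (n * m + 1) ⌈/⌉ n = m + 1 := by
  rw [Nat.ceilDiv_eq_add_pred_div, show n * m + 1 + n - 1 = n * m + n by omega,
    Nat.mul_add_div hn, Nat.div_self hn]

end CeilDiv

theorem dilSeq_apply (n : ℕ) (x : ℕ → ℝ) (k : ℕ) : dilSeq n x k = x (k ⌈/⌉ n) := by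
  rw [Nat.ceilDiv_eq_add_pred_div, dilSeq]

theorem natCast_mul_cesaroSeq (x : ℕ → ℝ) (k : ℕ) :
    k * cesaroSeq x k = ∑ i ∈ Finset.Icc 1 k, x i := by
  rcases k.eq_zero_or_pos with rfl | hk
  · simp
  · exact mul_div_cancel₀ _ (by positivity)

theorem abs_cesaroSeq_le {x : ℕ → ℝ} {C : ℝ} {k : ℕ} (hk : 0 < k)
    (hx : ∀ i ∈ Finset.Icc 1 k, |x i| ≤ C) : |cesaroSeq x k| ≤ C := by
  have hk' : (0 : ℝ) < k := by exact_mod_cast hk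
  rw [cesaroSeq, abs_div, Nat.abs_cast, div_le_iff₀' hk']
  calc |∑ i ∈ Finset.Icc 1 k, x i| ≤ ∑ _i ∈ Finset.Icc 1 k, C :=
        (Finset.abs_sum_le_sum_abs _ _).trans (Finset.sum_le_sum hx)
    _ = k * C := by simp

theorem sum_Icc_dilSeq {n : ℕ} (hn : 0 < n) (x : ℕ → ℝ) (k : ℕ) :
    ∑ i ∈ Finset.Icc 1 k, dilSeq n x i =
      n * ∑ i ∈ Finset.Icc 1 (k ⌈/⌉ n), x i - (n * (k ⌈/⌉ n : ℕ) - k) * x (k ⌈/⌉ n) := by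
  induction k with
  | zero => simp
  | succ k ih =>
    rw [Finset.sum_Icc_succ_top k.succ_pos, ih, dilSeq_apply]
    have le_block_end : k ≤ n * (k ⌈/⌉ n) := le_smul_ceilDiv hn
    rcases le_block_end.lt_or_eq with inside_block | block_end
    · rw [succ_ceilDiv_of_lt_mul_ceilDiv hn inside_block]
      push_cast
      ring
    · generalize k ⌈/⌉ n = m at block_end
      subst block_end
      rw [mul_add_one_ceilDiv hn, Finset.sum_Icc_succ_top m.succ_pos]
      push_cast
      ring

theorem cesaroSeq_dilSeq_sub_dilSeq_cesaroSeq {n k : ℕ} (hn : 0 < n) (hk : 0 < k) (x : ℕ → ℝ) :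
    cesaroSeq (dilSeq n x) k - dilSeq n (cesaroSeq x) k =
      (n * (k ⌈/⌉ n : ℕ) - k) / k * (cesaroSeq x (k ⌈/⌉ n) - x (k ⌈/⌉ n)) := by
  have hk' : (k : ℝ) ≠ 0 := by positivity
  rw [dilSeq_apply, cesaroSeq, sum_Icc_dilSeq hn, ← natCast_mul_cesaroSeq]
  field_simp
  ring

theorem abs_cesaroSeq_dilSeq_sub_dilSeq_cesaroSeq_le {x : ℕ → ℝ} {C : ℝ} {n k : ℕ}
    (hn : 0 < n) (hk : 0 < k) (hx : ∀ i ∈ Finset.Icc 1 (k ⌈/⌉ n), |x i| ≤ C) :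
    |cesaroSeq (dilSeq n x) k - dilSeq n (cesaroSeq x) k| ≤ 2 * n * C / k := by
  rw [cesaroSeq_dilSeq_sub_dilSeq_cesaroSeq hn hk]
  have hm : 0 < k ⌈/⌉ n := ceilDiv_pos_of_pos hn hk
  have lower : (k : ℝ) ≤ n * (k ⌈/⌉ n : ℕ) := by exact_mod_cast le_smul_ceilDiv hn
  have upper : (n * (k ⌈/⌉ n : ℕ) : ℝ) ≤ k + n := by exact_mod_cast mul_ceilDiv_le_add
  generalize k ⌈/⌉ n = m at *
  have deficit_le : |(n * m - k : ℝ) / k| ≤ n / k := by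
    rw [abs_div, Nat.abs_cast, abs_of_nonneg (sub_nonneg.2 lower)]
    gcongr
    linarith
  have oscillation_le : |cesaroSeq x m - x m| ≤ C + C :=
    (abs_sub _ _).trans <|
      add_le_add (abs_cesaroSeq_le hm hx) (hx m (Finset.right_mem_Icc.2 hm))
  calc |(n * m - k : ℝ) / k * (cesaroSeq x m - x m)|
      = |(n * m - k : ℝ) / k| * |cesaroSeq x m - x m| := abs_mul _ _
    _ ≤ n / k * (C + C) := by gcongr
    _ = 2 * n * C / k := by ring

/-- For every bounded real sequence `x`, every `n ≥ 1` and every `k ≥ 1`,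
`|(H(D_n x))_k − (D_n(Hx))_k| ≤ 2n‖x‖_∞/k` (stated for any uniform bound `C` of `x`);
consequently `H(D_n x) − D_n(Hx) ∈ c₀`. -/
theorem cesaro_dilation_commutator_bound (x : ℕ → ℝ) (C : ℝ)
    (hx : ∀ k : ℕ, 1 ≤ k → |x k| ≤ C) (n : ℕ) (hn : 1 ≤ n) :
    (∀ k : ℕ, 1 ≤ k →
      |cesaroSeq (dilSeq n x) k - dilSeq n (cesaroSeq x) k| ≤ 2 * (n : ℝ) * C / (k : ℝ)) ∧
    Tendsto (fun k : ℕ => cesaroSeq (dilSeq n x) k - dilSeq n (cesaroSeq x) k)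
      atTop (nhds 0) := by
  have bound : ∀ k : ℕ, 1 ≤ k →
      |cesaroSeq (dilSeq n x) k - dilSeq n (cesaroSeq x) k| ≤ 2 * (n : ℝ) * C / (k : ℝ) :=
    fun _ hk => abs_cesaroSeq_dilSeq_sub_dilSeq_cesaroSeq_le hn hk
      fun i hi => hx i (Finset.mem_Icc.1 hi).1
  exact ⟨bound, squeeze_zero_norm' (eventually_atTop.2 ⟨1, bound⟩)
    (tendsto_const_div_atTop_nhds_zero_nat _)⟩
end

section
/- Let f : [0,∞) → ℝ be bounded and continuous and let A ∈ ℝ. Suppose that 𝕃(f) = A for every linear functional 𝕃 on L∞((0,∞)) which is positive (𝕃(g) ≥ 0 whenever g ≥ 0 a.e.), satisfies ess liminf_{t → +∞} g(t) ≤ 𝕃(g) ≤ ess limsup_{t → +∞} g(t) for every real-valued g ∈ L∞((0,∞)), and is translation invariant: 𝕃(g(· + c)) = 𝕃(g) for every c > 0. Then lim_{t → ∞} (1/t)∫₀^t f(s) ds = A. -/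
open Filter MeasureTheory

/-- A function is (everywhere) bounded. -/
def BddFun (f : ℝ → ℝ) : Prop := ∃ C : ℝ, ∀ x, |f x| ≤ C

/-!
Along an ultrafilter `U` finer than `atTop`, the Cesàro means of every essentially bounded `g`
converge, since they are bounded, and their limit is linear in `g`. Moving the endpoints of
`∫ s in 0..t, g s` by a bounded amount changes the mean by `O(1 / t)`, so this limit is translation
invariant and only sees `g` near infinity: it is a Banach limit, and takes the value `A` at `f`.
Hence the Cesàro means of `f` tend to `A` along every such `U`, that is, along `atTop`.
-/

section BanachLimit

open Set Topology

local notation "μ₊" => Measure.restrict (volume : Measure ℝ) (Ioi 0)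

/-- The average of `g` over `[0, t]`. -/
noncomputable def cesaroMean (g : ℝ → ℝ) (t : ℝ) : ℝ := (∫ s in (0 : ℝ)..t, g s) / t

/-- Translation invariant positive functionals on `L∞((0,∞))` lying between the essential limits
inferior and superior at `+∞`. To avoid quotients, `L` is a functional on all functions, constrained
only at the essentially bounded ones; there `nonneg`, applied to `± (g - h)`, forces `L g = L h`
whenever `g = h` almost everywhere on `(0,∞)`. -/
structure IsBanachLimit (L : (ℝ → ℝ) →ₗ[ℝ] ℝ) : Prop where
  nonneg : ∀ g, MemLp g ⊤ μ₊ → (∀ᵐ x ∂μ₊, 0 ≤ g x) → 0 ≤ L g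
  liminf_le : ∀ g, MemLp g ⊤ μ₊ → liminf g (atTop ⊓ ae μ₊) ≤ L g
  le_limsup : ∀ g, MemLp g ⊤ μ₊ → L g ≤ limsup g (atTop ⊓ ae μ₊)
  map_comp_add_right : ∀ g, MemLp g ⊤ μ₊ → ∀ c, 0 < c → L (fun t => g (t + c)) = L g

/-- The functions in `ℒ^p(μ)`, before passing to almost everywhere equality classes. It serves as
the domain on which limits of Cesàro means are linear. -/
def memLpSubmodule {α : Type*} [MeasurableSpace α] (p : ENNReal) (μ : Measure α) :
    Submodule ℝ (α → ℝ) where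
  carrier := {g | MemLp g p μ}
  zero_mem' := MemLp.zero'
  add_mem' := MemLp.add
  smul_mem' c _ hg := hg.const_smul c

theorem exists_ae_norm_le_of_memLp_top {α E : Type*} [MeasurableSpace α] {μ : Measure α}
    [NormedAddCommGroup E] {g : α → E} (hg : MemLp g ⊤ μ) : ∃ C : ℝ, ∀ᵐ x ∂μ, ‖g x‖ ≤ C := by
  have hfin : eLpNormEssSup g μ ≠ ⊤ := by
    simpa only [eLpNorm_exponent_top] using hg.eLpNorm_ne_top
  refine ⟨(eLpNormEssSup g μ).toReal, ?_⟩
  filter_upwards [ae_le_eLpNormEssSup (f := g) (μ := μ)] with x hx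
  simpa only [toReal_enorm] using ENNReal.toReal_mono hfin hx

theorem memLp_top_of_continuousOn {f : ℝ → ℝ} {s : Set ℝ} {C : ℝ} (hf : ContinuousOn f s)
    (hs : MeasurableSet s) (hC : ∀ t ∈ s, |f t| ≤ C) : MemLp f ⊤ (volume.restrict s) :=
  memLp_top_of_bound (hf.aestronglyMeasurable hs) C (ae_restrict_of_forall_mem hs hC)

theorem BddFun.memLp_top {g : ℝ → ℝ} (hb : BddFun g) (hm : Measurable g) (μ : Measure ℝ) :
    MemLp g ⊤ μ :=
  let ⟨C, hC⟩ := hb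
  memLp_top_of_bound hm.aestronglyMeasurable C (ae_of_all _ hC)

theorem uIoc_subset_Ioi {α : Type*} [LinearOrder α] {a b c : α} (ha : c ≤ a) (hb : c ≤ b) :
    uIoc a b ⊆ Ioi c :=
  Ioc_subset_Ioi_self.trans (Ioi_subset_Ioi (le_min ha hb))

theorem intervalIntegrable_of_memLp {E : Type*} [NormedAddCommGroup E] {p : ENNReal} {s : Set ℝ}
    {g : ℝ → E} {a b : ℝ} (hg : MemLp g p (volume.restrict s)) (hp : 1 ≤ p) (hab : uIoc a b ⊆ s) :
    IntervalIntegrable g volume a b := by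
  rw [intervalIntegrable_iff]
  have : IsFiniteMeasure (volume.restrict (uIoc a b)) := ⟨by simp [uIoc]⟩
  exact (hg.mono_measure (Measure.restrict_mono hab le_rfl)).integrable hp

theorem norm_intervalIntegral_le_of_ae_restrict {E : Type*} [NormedAddCommGroup E]
    [NormedSpace ℝ E] {s : Set ℝ} {g : ℝ → E} {C a b : ℝ}
    (hC : ∀ᵐ x ∂volume.restrict s, ‖g x‖ ≤ C) (hab : uIoc a b ⊆ s) :
    ‖∫ x in a..b, g x‖ ≤ C * |b - a| :=
  intervalIntegral.norm_integral_le_of_norm_le_const_ae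
    ((ae_restrict_iff' measurableSet_uIoc).1 (ae_restrict_of_ae_restrict_of_subset hab hC))

theorem memLp_comp_add_right {E : Type*} [NormedAddCommGroup E] {p : ENNReal} {g : ℝ → E} {a c : ℝ}
    (hg : MemLp g p (volume.restrict (Ioi a))) (hc : 0 ≤ c) :
    MemLp (fun t => g (t + c)) p (volume.restrict (Ioi a)) := by
  have hshift : MeasurePreserving (· + c) (volume.restrict (Ioi a))
      (volume.restrict (Ioi (a + c))) := by
    simpa using (measurePreserving_add_right volume c).restrict_preimage
      (measurableSet_Ioi (a := a + c))
  have hsub : Ioi (a + c) ⊆ Ioi a := Ioi_subset_Ioi (le_add_of_nonneg_right hc)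
  exact (hg.mono_measure (Measure.restrict_mono hsub le_rfl)).comp_measurePreserving hshift

theorem exists_ae_restrict_Ioi_of_eventually {p : ℝ → Prop} {a : ℝ}
    (h : ∀ᶠ x in atTop ⊓ ae (volume.restrict (Ioi a)), p x) :
    ∃ T, a ≤ T ∧ ∀ᵐ x ∂volume.restrict (Ioi T), p x := by
  obtain ⟨s, hs, u, hu, hsu⟩ := eventually_inf.1 h
  obtain ⟨T, hT⟩ := mem_atTop_sets.1 hs
  have haT : a ≤ max T a := le_max_right T a
  refine ⟨max T a, haT, ?_⟩
  filter_upwards [ae_restrict_mem measurableSet_Ioi,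
    ae_restrict_of_ae_restrict_of_subset (Ioi_subset_Ioi haT) hu] with x hxT hxu
  exact hsu x ⟨hT x ((le_max_left T a).trans (mem_Ioi.1 hxT).le), hxu⟩

theorem cesaroMean_add {g h : ℝ → ℝ} {t : ℝ} (hg : IntervalIntegrable g volume 0 t)
    (hh : IntervalIntegrable h volume 0 t) :
    cesaroMean (g + h) t = cesaroMean g t + cesaroMean h t := by
  simp only [cesaroMean, Pi.add_apply, intervalIntegral.integral_add hg hh, add_div]

theorem cesaroMean_smul (c : ℝ) (g : ℝ → ℝ) (t : ℝ) :
    cesaroMean (c • g) t = c * cesaroMean g t := by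
  simp only [cesaroMean, Pi.smul_apply, smul_eq_mul, intervalIntegral.integral_const_mul,
    mul_div_assoc]

theorem cesaroMean_const (a : ℝ) {t : ℝ} (ht : t ≠ 0) : cesaroMean (fun _ => a) t = a := by
  simp only [cesaroMean, intervalIntegral.integral_const, sub_zero, smul_eq_mul,
    mul_div_cancel_left₀ a ht]

theorem abs_cesaroMean_le {g : ℝ → ℝ} {C t : ℝ} (hC : ∀ᵐ x ∂μ₊, ‖g x‖ ≤ C) (ht : 0 < t) :
    |cesaroMean g t| ≤ C := by
  rw [cesaroMean, abs_div, abs_of_pos ht, div_le_iff₀ ht]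
  simpa only [Real.norm_eq_abs, sub_zero, abs_of_pos ht] using
    norm_intervalIntegral_le_of_ae_restrict hC (uIoc_subset_Ioi le_rfl ht.le)

theorem tendsto_integral_div_sub_cesaroMean {g : ℝ → ℝ} {a b : ℝ} (hg : MemLp g ⊤ μ₊)
    (ha : 0 ≤ a) (hb : 0 ≤ b) :
    Tendsto (fun t => (∫ s in a..t + b, g s) / t - cesaroMean g t) atTop (𝓝 0) := by
  obtain ⟨C, hC⟩ := exists_ae_norm_le_of_memLp_top hg
  have hint {x y : ℝ} (hx : 0 ≤ x) (hy : 0 ≤ y) : IntervalIntegrable g volume x y :=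
    intervalIntegrable_of_memLp hg le_top (uIoc_subset_Ioi hx hy)
  refine squeeze_zero_norm' ?_
    ((tendsto_const_nhds (x := C * (a + b))).div_atTop tendsto_id)
  filter_upwards [eventually_gt_atTop 0] with t ht
  have htb : 0 ≤ t + b := add_nonneg ht.le hb
  rw [cesaroMean, ← sub_div, Real.norm_eq_abs, abs_div, abs_of_pos ht]
  refine div_le_div_of_nonneg_right ?_ ht.le
  calc |(∫ s in a..t + b, g s) - ∫ s in 0..t, g s|
      = |(∫ s in a..0, g s) - ∫ s in (t + b)..t, g s| := by
        rw [intervalIntegral.integral_interval_sub_interval_comm (hint ha htb)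
          (hint le_rfl ht.le) (hint ha le_rfl)]
    _ ≤ |∫ s in a..0, g s| + |∫ s in (t + b)..t, g s| := abs_sub _ _
    _ ≤ C * |0 - a| + C * |t - (t + b)| :=
        add_le_add
          (norm_intervalIntegral_le_of_ae_restrict hC (uIoc_subset_Ioi ha le_rfl))
          (norm_intervalIntegral_le_of_ae_restrict hC (uIoc_subset_Ioi htb ht.le))
    _ = C * (a + b) := by
        rw [zero_sub, abs_neg, abs_of_nonneg ha, sub_add_cancel_left, abs_neg, abs_of_nonneg hb,
          mul_add]

section Limit

variable {F : Filter ℝ} [F.NeBot] {g : ℝ → ℝ} {l : ℝ}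

theorem nonneg_of_tendsto_cesaroMean (hF : F ≤ atTop) (hg : MemLp g ⊤ μ₊)
    (hl : Tendsto (cesaroMean g) F (𝓝 l)) (hpos : ∀ᶠ x in atTop ⊓ ae μ₊, 0 ≤ g x) : 0 ≤ l := by
  obtain ⟨T, hT, hposT⟩ := exists_ae_restrict_Ioi_of_eventually hpos
  have hlim : Tendsto (fun t => (∫ s in T..t, g s) / t) F (𝓝 l) := by
    simpa using ((tendsto_integral_div_sub_cesaroMean hg hT le_rfl).mono_left hF).add hl
  refine ge_of_tendsto hlim (hF ?_)
  filter_upwards [eventually_ge_atTop T] with t ht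
  refine div_nonneg ?_ (hT.trans ht)
  rw [intervalIntegral.integral_of_le ht]
  exact integral_nonneg_of_ae (ae_mono (Measure.restrict_mono Ioc_subset_Ioi_self le_rfl) hposT)

theorem eq_of_tendsto_cesaroMean_comp_add_right {c m : ℝ} (hF : F ≤ atTop) (hg : MemLp g ⊤ μ₊)
    (hc : 0 ≤ c) (hm : Tendsto (cesaroMean fun t => g (t + c)) F (𝓝 m))
    (hl : Tendsto (cesaroMean g) F (𝓝 l)) : m = l := by
  have hshift : Tendsto (cesaroMean fun t => g (t + c)) F (𝓝 (0 + l)) := by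
    refine (((tendsto_integral_div_sub_cesaroMean hg hc hc).mono_left hF).add hl).congr fun t => ?_
    rw [sub_add_cancel, cesaroMean, intervalIntegral.integral_comp_add_right, zero_add]
  exact zero_add l ▸ tendsto_nhds_unique hm hshift

theorem isBanachLimit_of_tendsto_cesaroMean {L : (ℝ → ℝ) →ₗ[ℝ] ℝ} (hF : F ≤ atTop)
    (hL : ∀ g, MemLp g ⊤ μ₊ → Tendsto (cesaroMean g) F (𝓝 (L g))) : IsBanachLimit L := by
  have hconst (a : ℝ) : MemLp (fun _ => a) ⊤ μ₊ := memLp_top_const a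
  have L_const (a : ℝ) : L (fun _ => a) = a := by
    refine tendsto_nhds_unique (hL _ (hconst a)) (tendsto_const_nhds.congr' (hF ?_))
    filter_upwards [eventually_ne_atTop 0] with t ht using (cesaroMean_const a ht).symm
  have L_mono {g h : ℝ → ℝ} (hg : MemLp g ⊤ μ₊) (hh : MemLp h ⊤ μ₊)
      (hgh : ∀ᶠ x in atTop ⊓ ae μ₊, g x ≤ h x) : L g ≤ L h := by
    rw [← sub_nonneg, ← map_sub]
    exact nonneg_of_tendsto_cesaroMean hF (hh.sub hg) (hL _ (hh.sub hg))
      (hgh.mono fun _ => sub_nonneg.2)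
  have hbdd {g : ℝ → ℝ} (hg : MemLp g ⊤ μ₊) : ∃ C, ∀ᶠ x in atTop ⊓ ae μ₊, ‖g x‖ ≤ C :=
    (exists_ae_norm_le_of_memLp_top hg).imp fun _ hC => hC.filter_mono inf_le_right
  refine ⟨fun g hg hpos => ?_, fun g hg => ?_, fun g hg => ?_, fun g hg c hc => ?_⟩
  · exact nonneg_of_tendsto_cesaroMean hF hg (hL g hg) (hpos.filter_mono inf_le_right)
  · obtain ⟨C, hC⟩ := hbdd hg
    refine le_of_forall_lt_imp_le_of_dense fun a ha => L_const a ▸ L_mono (hconst a) hg ?_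
    exact (eventually_lt_of_lt_liminf ha (isBoundedUnder_of_eventually_ge
      (hC.mono fun _ hx => (abs_le.1 hx).1))).mono fun _ => le_of_lt
  · obtain ⟨C, hC⟩ := hbdd hg
    refine le_of_forall_gt_imp_ge_of_dense fun a ha => L_const a ▸ L_mono hg (hconst a) ?_
    exact (eventually_lt_of_limsup_lt ha (isBoundedUnder_of_eventually_le
      (hC.mono fun _ hx => (abs_le.1 hx).2))).mono fun _ => le_of_lt
  · exact eq_of_tendsto_cesaroMean_comp_add_right hF hg hc.le
      (hL _ (memLp_comp_add_right hg hc.le)) (hL g hg)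

end Limit

theorem exists_tendsto_cesaroMean {g : ℝ → ℝ} {U : Ultrafilter ℝ} (hU : (U : Filter ℝ) ≤ atTop)
    (hg : MemLp g ⊤ μ₊) : ∃ l, Tendsto (cesaroMean g) U (𝓝 l) := by
  obtain ⟨C, hC⟩ := exists_ae_norm_le_of_memLp_top hg
  have hmem : ∀ᶠ t in (U : Filter ℝ), cesaroMean g t ∈ Icc (-C) C :=
    hU ((eventually_gt_atTop 0).mono fun t ht => abs_le.1 (abs_cesaroMean_le hC ht))
  obtain ⟨l, -, hl⟩ := isCompact_Icc.ultrafilter_le_nhds' (U.map (cesaroMean g)) hmem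
  exact ⟨l, hl⟩

theorem exists_linearMap_tendsto_cesaroMean {U : Ultrafilter ℝ} (hU : (U : Filter ℝ) ≤ atTop) :
    ∃ L : (ℝ → ℝ) →ₗ[ℝ] ℝ, ∀ g, MemLp g ⊤ μ₊ → Tendsto (cesaroMean g) U (𝓝 (L g)) := by
  choose l hl using fun g : memLpSubmodule ⊤ μ₊ => exists_tendsto_cesaroMean hU g.2
  let L₀ : memLpSubmodule ⊤ μ₊ →ₗ[ℝ] ℝ :=
    { toFun := l
      map_add' := fun g h => by
        refine tendsto_nhds_unique (hl (g + h)) (((hl g).add (hl h)).congr' (hU ?_))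
        filter_upwards [eventually_ge_atTop 0] with t ht
        have h0t := uIoc_subset_Ioi le_rfl ht
        exact (cesaroMean_add (intervalIntegrable_of_memLp g.2 le_top h0t)
          (intervalIntegrable_of_memLp h.2 le_top h0t)).symm
      map_smul' := fun c g =>
        tendsto_nhds_unique (hl (c • g))
          (((hl g).const_mul c).congr fun t => (cesaroMean_smul c g t).symm) }
  obtain ⟨L, hL⟩ := L₀.exists_extend
  refine ⟨L, fun g hg => ?_⟩
  have hLg : L g = l ⟨g, hg⟩ := LinearMap.congr_fun hL ⟨g, hg⟩
  exact hLg ▸ hl ⟨g, hg⟩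

theorem almost_convergent_implies_cesaro_convergent_general {f : ℝ → ℝ} {A : ℝ}
    (hf : MemLp f ⊤ μ₊) (hL : ∀ L, IsBanachLimit L → L f = A) :
    Tendsto (fun t : ℝ => (∫ s in (0 : ℝ)..t, f s) / t) atTop (𝓝 A) := by
  refine (tendsto_iff_ultrafilter _ _ _).2 fun U hU => ?_
  obtain ⟨L, hlim⟩ := exists_linearMap_tendsto_cesaroMean hU
  exact hL L (isBanachLimit_of_tendsto_cesaroMean hU hlim) ▸ hlim f hf

end BanachLimit

/-- If `f : [0,∞) → ℝ` is bounded and continuous and every positive, translation invariant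
linear functional `𝕃` on `L∞((0,∞))` lying between the essential liminf and limsup at `+∞`
takes the value `A` on `f` (i.e. `f` is almost convergent to `A`), then the Cesàro means
`(1/t)∫₀^t f(s) ds` converge to `A` as `t → ∞`. -/
theorem almost_convergent_implies_cesaro_convergent (f : ℝ → ℝ) (C : ℝ)
    (hf : ContinuousOn f (Set.Ici 0)) (hbd : ∀ t : ℝ, 0 ≤ t → |f t| ≤ C) (A : ℝ)
    (hL : ∀ L : (ℝ → ℝ) →ₗ[ℝ] ℝ,
      -- L is positive
      (∀ g : ℝ → ℝ, Measurable g → BddFun g →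
        (∀ᵐ x ∂((volume : Measure ℝ).restrict (Set.Ioi 0)), 0 ≤ g x) → 0 ≤ L g) →
      -- L lies between the essential liminf and limsup at +∞
      (∀ g : ℝ → ℝ, Measurable g → BddFun g →
        liminf g (atTop ⊓ ae ((volume : Measure ℝ).restrict (Set.Ioi 0))) ≤ L g ∧
          L g ≤ limsup g (atTop ⊓ ae ((volume : Measure ℝ).restrict (Set.Ioi 0)))) →
      -- L is translation invariant
      (∀ g : ℝ → ℝ, Measurable g → BddFun g →
        ∀ c : ℝ, 0 < c → L (fun t => g (t + c)) = L g) →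
      L f = A) :
    Tendsto (fun t : ℝ => (∫ s in (0:ℝ)..t, f s) / t) atTop (nhds A) := by
  refine almost_convergent_implies_cesaro_convergent_general
    (memLp_top_of_continuousOn (hf.mono Set.Ioi_subset_Ici_self) measurableSet_Ioi
      fun t ht => hbd t (le_of_lt ht)) fun L hBL => hL L ?_ ?_ ?_
  · exact fun g hm hb => hBL.nonneg g (hb.memLp_top hm _)
  · exact fun g hm hb =>
      ⟨hBL.liminf_le g (hb.memLp_top hm _), hBL.le_limsup g (hb.memLp_top hm _)⟩
  · exact fun g hm hb => hBL.map_comp_add_right g (hb.memLp_top hm _)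
end

section
/- Let μ : [0,∞) → [0,∞) be nonincreasing, let K > 0 satisfy ∫₀^t μ(s) ds ≤ K·log(1+t) for all t > 0, and set g(t) = (1/log(1+t))∫₀^t μ(s) ds for t > 0. Then for A ∈ ℝ the following are equivalent: (a) ω(g) = A for every linear functional ω on L∞((0,∞)) which is positive (ω(f) ≥ 0 whenever f ≥ 0 a.e.), satisfies ess liminf_{t → +∞} f(t) ≤ ω(f) ≤ ess limsup_{t → +∞} f(t) for every real-valued f ∈ L∞((0,∞)), and is dilation invariant: ω(f(·/c)) = ω(f) for every c > 0; (b) lim_{t → ∞} g(t) = A. -/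
open Filter MeasureTheory

/-- `g(t) = (1/log(1+t)) ∫₀^t μ(s) ds` for `t > 0` (and `0` for `t ≤ 0`). -/
noncomputable def gFn (μ : ℝ → ℝ) : ℝ → ℝ := fun t =>
  if 0 < t then (∫ s in (0:ℝ)..t, μ s) / Real.log (1 + t) else 0

/-!
Logarithmic means `(∫ f(t) dt/t) / log (b/a)` over windows `[a, b]` with `a → ∞` and `b/a → ∞` are
asymptotically dilation invariant, so every limit of them along an ultrafilter is a functional of
the kind considered in (a). If all these functionals agree on `f`, then the means of `f` converge
along every such family of windows. For a function that is slowly decreasing at the scale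
`t ↦ t ^ κ`, comparing `f t` with its means over `[t, t ^ κ]` and `[t ^ (1/κ), t]` then forces
convergence of `f` itself, and `gFn μ` is slowly decreasing because its numerator is nondecreasing.
-/

theorem exists_linearMap_tendsto_ultrafilter {ι 𝕜 E F : Type*} [NormedField 𝕜]
    [AddCommGroup E] [Module 𝕜 E] [NormedAddCommGroup F] [NormedSpace 𝕜 F] [ProperSpace F]
    (U : Ultrafilter ι) (p : Submodule 𝕜 E) (T : ι → p →ₗ[𝕜] F)
    (hT : ∀ v, ∃ C, ∀ᶠ i in (U : Filter ι), ‖T i v‖ ≤ C) :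
    ∃ ω : E →ₗ[𝕜] F, ∀ v : p, Tendsto (fun i => T i v) U (nhds (ω v)) := by
  have hlim : ∀ v, ∃ y, Tendsto (fun i => T i v) U (nhds y) := fun v => by
    obtain ⟨C, hC⟩ := hT v
    obtain ⟨y, -, hy⟩ := (isCompact_closedBall (0 : F) C).ultrafilter_le_nhds
      (U.map fun i => T i v) (le_principal_iff.2 (hC.mono fun _ => mem_closedBall_zero_iff.2))
    exact ⟨y, hy⟩
  choose L hL using hlim
  obtain ⟨ω, hω⟩ := (linearMapOfTendsto L T (tendsto_pi_nhds.2 hL)).exists_extend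
  refine ⟨ω, fun v => ?_⟩
  have hωv : ω v = L v := LinearMap.congr_fun hω v
  exact hωv ▸ hL v

theorem quasiMeasurePreserving_exp :
    Measure.QuasiMeasurePreserving Real.exp volume (volume.restrict (Set.Ioi 0)) := by
  refine ⟨Real.measurable_exp, Measure.AbsolutelyContinuous.mk fun s hs hs0 => ?_⟩
  rw [Measure.restrict_apply hs] at hs0
  rw [Measure.map_apply Real.measurable_exp hs]
  have hlog : DifferentiableOn ℝ Real.log (s ∩ Set.Ioi 0) := fun x hx =>
    (Real.differentiableAt_log hx.2.ne').differentiableWithinAt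
  refine measure_mono_null (fun u hu => ?_)
    (addHaar_image_eq_zero_of_differentiableOn_of_addHaar_eq_zero volume hlog hs0)
  exact ⟨Real.exp u, ⟨hu, Real.exp_pos u⟩, Real.log_exp u⟩

/-- The filter at `+∞` modulo null sets: `liminf` and `limsup` along it are the essential ones. -/
noncomputable def essAtTop : Filter ℝ := atTop ⊓ ae ((volume : Measure ℝ).restrict (Set.Ioi 0))

instance essAtTop_neBot : NeBot essAtTop := by
  refine inf_neBot_iff_frequently_left.2 fun {p} hp => frequently_ae_iff.2 fun hnull => ?_
  obtain ⟨N, hN⟩ := eventually_atTop.1 hp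
  have hsub : Set.Ioi (max N 0) ⊆ {x | p x} ∩ Set.Ioi 0 := fun x hx =>
    ⟨hN x ((le_max_left N 0).trans hx.le), (le_max_right N 0).trans_lt hx⟩
  have hIoi : volume (Set.Ioi (max N 0)) = 0 :=
    measure_mono_null hsub (nonpos_iff_eq_zero.1 ((Measure.le_restrict_apply _ _).trans hnull.le))
  simp at hIoi

theorem tendsto_exp_essAtTop : Tendsto Real.exp (atTop ⊓ ae volume) essAtTop :=
  Real.tendsto_exp_atTop.inf quasiMeasurePreserving_exp.tendsto_ae

namespace BddFun

variable {f g : ℝ → ℝ}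

theorem add (hf : BddFun f) (hg : BddFun g) : BddFun (f + g) :=
  let ⟨C, hC⟩ := hf
  let ⟨D, hD⟩ := hg
  ⟨C + D, fun x => (abs_add_le _ _).trans (add_le_add (hC x) (hD x))⟩

theorem const_smul (hf : BddFun f) (c : ℝ) : BddFun (c • f) :=
  let ⟨C, hC⟩ := hf
  ⟨|c| * C, fun x => (abs_mul c (f x)).trans_le (mul_le_mul_of_nonneg_left (hC x) (abs_nonneg c))⟩

theorem neg (hf : BddFun f) : BddFun (-f) :=
  let ⟨C, hC⟩ := hf
  ⟨C, fun x => (abs_neg (f x)).trans_le (hC x)⟩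

theorem comp (hf : BddFun f) (φ : ℝ → ℝ) : BddFun (f ∘ φ) :=
  let ⟨C, hC⟩ := hf
  ⟨C, fun x => hC (φ x)⟩

theorem isBoundedUnder_le (hf : BddFun f) (l : Filter ℝ) : IsBoundedUnder (· ≤ ·) l f :=
  let ⟨C, hC⟩ := hf
  isBoundedUnder_of ⟨C, fun x => (abs_le.1 (hC x)).2⟩

theorem isBoundedUnder_ge (hf : BddFun f) (l : Filter ℝ) : IsBoundedUnder (· ≥ ·) l f :=
  let ⟨C, hC⟩ := hf
  isBoundedUnder_of ⟨-C, fun x => (abs_le.1 (hC x)).1⟩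

theorem intervalIntegrable (hf : BddFun f) (hfm : Measurable f) (a b : ℝ) :
    IntervalIntegrable f volume a b :=
  let ⟨_, hC⟩ := hf
  intervalIntegrable_const.mono_fun' hfm.aestronglyMeasurable (.of_forall hC)

end BddFun

/-- The space of bounded measurable functions on `ℝ`, representatives of the elements of `L∞`. -/
def boundedMeasurable : Submodule ℝ (ℝ → ℝ) where
  carrier := {f | Measurable f ∧ BddFun f}
  add_mem' hf hg := ⟨hf.1.add hg.1, hf.2.add hg.2⟩
  zero_mem' := ⟨measurable_zero, 0, fun _ => abs_zero.le⟩
  smul_mem' c _ hf := ⟨hf.1.const_smul c, hf.2.const_smul c⟩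

/-- The logarithmic mean of `f` over `[exp p, exp q]`, i.e. its mean with respect to `dt / t`,
written in the variable `log t`. -/
noncomputable def logAverage (f : ℝ → ℝ) (p q : ℝ) : ℝ := ⨍ u in p..q, f (Real.exp u)

section LogAverage

variable {f : ℝ → ℝ} {p q : ℝ}

theorem intervalIntegrable_comp_exp (hfm : Measurable f) (hfb : BddFun f) (p q : ℝ) :
    IntervalIntegrable (fun u => f (Real.exp u)) volume p q :=
  (hfb.comp Real.exp).intervalIntegrable (hfm.comp Real.measurable_exp) p q

theorem logAverage_add {g : ℝ → ℝ} (hfm : Measurable f) (hfb : BddFun f) (hgm : Measurable g)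
    (hgb : BddFun g) (p q : ℝ) :
    logAverage (f + g) p q = logAverage f p q + logAverage g p q := by
  simp only [logAverage, interval_average_eq_div, Pi.add_apply]
  rw [intervalIntegral.integral_add (intervalIntegrable_comp_exp hfm hfb p q)
    (intervalIntegrable_comp_exp hgm hgb p q), add_div]

theorem logAverage_const_smul (c : ℝ) (f : ℝ → ℝ) (p q : ℝ) :
    logAverage (c • f) p q = c * logAverage f p q := by
  simp only [logAverage, interval_average_eq_div, Pi.smul_apply, smul_eq_mul,
    intervalIntegral.integral_const_mul, mul_div_assoc]

theorem logAverage_mem {s : Set ℝ} (hs : Convex ℝ s) (hsc : IsClosed s) (hfm : Measurable f)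
    (hfb : BddFun f) (hpq : p < q) (h : ∀ᵐ u, u ∈ Set.Ioc p q → f (Real.exp u) ∈ s) :
    logAverage f p q ∈ s := by
  rw [logAverage, Set.uIoc_of_le hpq.le]
  refine hs.set_average_mem hsc ?_ ?_ ((ae_restrict_iff' measurableSet_Ioc).2 h)
    (intervalIntegrable_comp_exp hfm hfb p q).1
  · simpa using hpq
  · simp

theorem abs_logAverage_comp_div_sub_le (hfm : Measurable f) {C : ℝ} (hC : ∀ x, |f x| ≤ C) {c : ℝ}
    (hc : 0 < c) (hpq : p < q) :
    |logAverage (fun t => f (t / c)) p q - logAverage f p q| ≤ 2 * C * |Real.log c| / (q - p) := by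
  set h : ℝ → ℝ := fun u => f (Real.exp u)
  have hint : ∀ a b, IntervalIntegrable h volume a b := intervalIntegrable_comp_exp hfm ⟨C, hC⟩
  have hle : ∀ a b, |∫ u in a..b, h u| ≤ C * |b - a| := fun _ _ =>
    intervalIntegral.norm_integral_le_of_norm_le_const (f := h) fun u _ => hC (Real.exp u)
  have hshift : ∀ u, f (Real.exp u / c) = h (u - Real.log c) := fun u => by
    simp only [h, Real.exp_sub, Real.exp_log hc]
  have hp := hle (p - Real.log c) p
  have hq := hle (q - Real.log c) q
  rw [sub_sub_cancel] at hp hq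
  simp only [logAverage, interval_average_eq_div, hshift]
  rw [intervalIntegral.integral_comp_sub_right h, ← sub_div,
    abs_div, abs_of_pos (sub_pos.2 hpq),
    intervalIntegral.integral_interval_sub_interval_comm (hint _ _) (hint _ _) (hint _ _)]
  refine div_le_div_of_nonneg_right ((abs_sub _ _).trans ?_) (sub_pos.2 hpq).le
  linarith

end LogAverage

/-- The functionals over which (a) quantifies: positive, between the essential `liminf` and
`limsup` at `+∞`, and dilation invariant. As `ω` acts on all functions `ℝ → ℝ`, the conditions
constrain only its values on bounded measurable ones. -/
structure IsDixmierFunctional (ω : (ℝ → ℝ) →ₗ[ℝ] ℝ) : Prop where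
  nonneg : ∀ f : ℝ → ℝ, Measurable f → BddFun f →
    (∀ᵐ x ∂((volume : Measure ℝ).restrict (Set.Ioi 0)), 0 ≤ f x) → 0 ≤ ω f
  liminf_le_le_limsup : ∀ f : ℝ → ℝ, Measurable f → BddFun f →
    liminf f essAtTop ≤ ω f ∧ ω f ≤ limsup f essAtTop
  map_dilation : ∀ f : ℝ → ℝ, Measurable f → BddFun f →
    ∀ c : ℝ, 0 < c → ω (fun t => f (t / c)) = ω f

namespace IsDixmierFunctional

variable {ω : (ℝ → ℝ) →ₗ[ℝ] ℝ} {f : ℝ → ℝ}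

theorem of_forall_eventually_ge
    (hge : ∀ f : ℝ → ℝ, Measurable f → BddFun f → ∀ C, (∀ᶠ t in essAtTop, C ≤ f t) → C ≤ ω f)
    (hdil : ∀ f : ℝ → ℝ, Measurable f → BddFun f →
      ∀ c : ℝ, 0 < c → ω (fun t => f (t / c)) = ω f) :
    IsDixmierFunctional ω where
  nonneg f hfm hfb h := hge f hfm hfb 0 (h.filter_mono inf_le_right)
  liminf_le_le_limsup f hfm hfb := by
    refine ⟨le_of_forall_lt_imp_le_of_dense fun C hC => ?_,
      le_of_forall_gt_imp_ge_of_dense fun C hC => ?_⟩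
    · exact hge f hfm hfb C
        ((eventually_lt_of_lt_liminf hC (hfb.isBoundedUnder_ge _)).mono fun _ => le_of_lt)
    · have hneg : -C ≤ ω (-f) := hge (-f) hfm.neg hfb.neg (-C)
        ((eventually_lt_of_limsup_lt hC (hfb.isBoundedUnder_le _)).mono fun _ h =>
          neg_le_neg h.le)
      rw [map_neg] at hneg
      exact neg_le_neg_iff.1 hneg
  map_dilation := hdil

theorem apply_eq_of_tendsto (hω : IsDixmierFunctional ω) (hfm : Measurable f) (hfb : BddFun f)
    {A : ℝ} (hf : Tendsto f atTop (nhds A)) : ω f = A := by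
  have hf' : Tendsto f essAtTop (nhds A) := hf.mono_left inf_le_left
  obtain ⟨hle, hge⟩ := hω.liminf_le_le_limsup f hfm hfb
  rw [hf'.liminf_eq] at hle
  rw [hf'.limsup_eq] at hge
  exact le_antisymm hge hle

end IsDixmierFunctional

section Windows

variable {ι : Type*} {p q : ι → ℝ} {f : ℝ → ℝ}

theorem exists_linearMap_tendsto_logAverage (U : Ultrafilter ι)
    (hpq : ∀ᶠ i in (U : Filter ι), p i < q i) :
    ∃ ω : (ℝ → ℝ) →ₗ[ℝ] ℝ, ∀ f : ℝ → ℝ, Measurable f → BddFun f →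
      Tendsto (fun i => logAverage f (p i) (q i)) U (nhds (ω f)) := by
  let T (i : ι) : boundedMeasurable →ₗ[ℝ] ℝ :=
    { toFun f := logAverage f (p i) (q i)
      map_add' f g := logAverage_add f.2.1 f.2.2 g.2.1 g.2.2 _ _
      map_smul' c f := logAverage_const_smul c f _ _ }
  obtain ⟨ω, hω⟩ := exists_linearMap_tendsto_ultrafilter U boundedMeasurable T fun f => by
    obtain ⟨hfm, C, hC⟩ := f.2
    refine ⟨C, hpq.mono fun i hi => abs_le.2 ?_⟩
    exact logAverage_mem (convex_Icc (-C) C) isClosed_Icc hfm ⟨C, hC⟩ hi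
      (.of_forall fun u _ => abs_le.1 (hC (Real.exp u)))
  exact ⟨ω, fun f hfm hfb => hω ⟨f, hfm, hfb⟩⟩

theorem eventually_le_logAverage {l : Filter ι} (hp : Tendsto p l atTop)
    (hpq : ∀ᶠ i in l, p i < q i) (hfm : Measurable f) (hfb : BddFun f) {C : ℝ}
    (hC : ∀ᶠ t in essAtTop, C ≤ f t) : ∀ᶠ i in l, C ≤ logAverage f (p i) (q i) := by
  obtain ⟨s, hs, t, ht, hst⟩ := eventually_inf.1 (tendsto_exp_essAtTop.eventually hC)
  obtain ⟨N, hN⟩ := mem_atTop_sets.1 hs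
  filter_upwards [hp.eventually_ge_atTop N, hpq] with i hNi hi
  refine logAverage_mem (convex_Ici C) isClosed_Ici hfm hfb hi ?_
  filter_upwards [ht] with u hut hu
  exact hst u ⟨hN u (hNi.trans hu.1.le), hut⟩

theorem tendsto_logAverage_comp_div_sub {l : Filter ι} (hqp : Tendsto (fun i => q i - p i) l atTop)
    (hfm : Measurable f) (hfb : BddFun f) {c : ℝ} (hc : 0 < c) :
    Tendsto (fun i => logAverage (fun t => f (t / c)) (p i) (q i) - logAverage f (p i) (q i))
      l (nhds 0) := by
  obtain ⟨C, hC⟩ := hfb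
  refine squeeze_zero_norm' ?_ (hqp.const_div_atTop (2 * C * |Real.log c|))
  filter_upwards [hqp.eventually_gt_atTop 0] with i hi
  exact abs_logAverage_comp_div_sub_le hfm hC hc (sub_pos.1 hi)

theorem exists_isDixmierFunctional_tendsto_logAverage (U : Ultrafilter ι)
    (hp : Tendsto p U atTop) (hqp : Tendsto (fun i => q i - p i) U atTop) :
    ∃ ω : (ℝ → ℝ) →ₗ[ℝ] ℝ, IsDixmierFunctional ω ∧ ∀ f : ℝ → ℝ, Measurable f → BddFun f →
      Tendsto (fun i => logAverage f (p i) (q i)) U (nhds (ω f)) := by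
  have hpq : ∀ᶠ i in (U : Filter ι), p i < q i :=
    (hqp.eventually_gt_atTop 0).mono fun _ => sub_pos.1
  obtain ⟨ω, hω⟩ := exists_linearMap_tendsto_logAverage U hpq
  refine ⟨ω, .of_forall_eventually_ge (fun f hfm hfb C hC => ?_) fun f hfm hfb c hc => ?_, hω⟩
  · exact ge_of_tendsto (hω f hfm hfb) (eventually_le_logAverage hp hpq hfm hfb hC)
  · have hdil := hω _ (hfm.comp (measurable_id.div_const c)) (hfb.comp (· / c))
    exact sub_eq_zero.1 (tendsto_nhds_unique (hdil.sub (hω f hfm hfb))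
      (tendsto_logAverage_comp_div_sub hqp hfm hfb hc))

theorem tendsto_logAverage_of_forall_isDixmierFunctional {l : Filter ι} {A : ℝ}
    (hfm : Measurable f) (hfb : BddFun f) (hf : ∀ ω, IsDixmierFunctional ω → ω f = A)
    (hp : Tendsto p l atTop) (hqp : Tendsto (fun i => q i - p i) l atTop) :
    Tendsto (fun i => logAverage f (p i) (q i)) l (nhds A) := by
  refine (tendsto_iff_ultrafilter _ _ _).2 fun U hU => ?_
  obtain ⟨ω, hω, hlim⟩ :=
    exists_isDixmierFunctional_tendsto_logAverage U (hp.mono_left hU) (hqp.mono_left hU)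
  exact hf ω hω ▸ hlim f hfm hfb

end Windows

/-- Schmidt's slow decrease condition at the scale `s ↦ s ^ κ`, `κ ↓ 1`, which is the Tauberian
condition for logarithmic means. -/
def LogSlowlyDecreasing (f : ℝ → ℝ) : Prop :=
  ∀ ε > (0 : ℝ), ∃ κ > (1 : ℝ), ∀ᶠ s : ℝ in atTop, ∀ t ∈ Set.Icc s (s ^ κ), f s - ε ≤ f t

namespace LogSlowlyDecreasing

variable {f : ℝ → ℝ} {A : ℝ}

theorem exists_forall_exp (hf : LogSlowlyDecreasing f) {ε : ℝ} (hε : 0 < ε) :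
    ∃ κ > 1, ∀ᶠ u : ℝ in atTop, ∀ v ∈ Set.Icc u (κ * u), f (Real.exp u) - ε ≤ f (Real.exp v) := by
  obtain ⟨κ, hκ, h⟩ := hf ε hε
  refine ⟨κ, hκ, (Real.tendsto_exp_atTop.eventually h).mono fun u hu v hv => hu _ ⟨?_, ?_⟩⟩
  · exact Real.exp_le_exp.2 hv.1
  · rw [← Real.exp_mul, mul_comm]
    exact Real.exp_le_exp.2 hv.2

theorem exists_sub_le_logAverage (hf : LogSlowlyDecreasing f) (hfm : Measurable f)
    (hfb : BddFun f) {ε : ℝ} (hε : 0 < ε) :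
    ∃ κ > 1, ∀ᶠ u : ℝ in atTop, f (Real.exp u) - ε ≤ logAverage f u (κ * u) := by
  obtain ⟨κ, hκ, h⟩ := hf.exists_forall_exp hε
  refine ⟨κ, hκ, ?_⟩
  filter_upwards [h, eventually_gt_atTop 0] with u hu hu0
  exact logAverage_mem (convex_Ici _) isClosed_Ici hfm hfb (lt_mul_of_one_lt_left hu0 hκ)
    (.of_forall fun v hv => hu v (Set.Ioc_subset_Icc_self hv))

theorem exists_logAverage_le_add (hf : LogSlowlyDecreasing f) (hfm : Measurable f)
    (hfb : BddFun f) {ε : ℝ} (hε : 0 < ε) :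
    ∃ κ > 1, ∀ᶠ u : ℝ in atTop, logAverage f u (κ * u) ≤ f (Real.exp (κ * u)) + ε := by
  obtain ⟨κ, hκ, h⟩ := hf.exists_forall_exp hε
  refine ⟨κ, hκ, ?_⟩
  filter_upwards [eventually_forall_ge_atTop.2 h, eventually_gt_atTop 0] with u hu hu0
  refine logAverage_mem (convex_Iic _) isClosed_Iic hfm hfb (lt_mul_of_one_lt_left hu0 hκ)
    (.of_forall fun v hv => sub_le_iff_le_add.1 (hu v hv.1.le _ ⟨hv.2, ?_⟩))
  exact mul_le_mul_of_nonneg_left hv.1.le (zero_lt_one.trans hκ).le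

theorem tendsto_of_tendsto_logAverage (hf : LogSlowlyDecreasing f) (hfm : Measurable f)
    (hfb : BddFun f)
    (hA : ∀ κ > 1, Tendsto (fun u => logAverage f u (κ * u)) atTop (nhds A)) :
    Tendsto f atTop (nhds A) := by
  suffices hexp : Tendsto (fun u => f (Real.exp u)) atTop (nhds A) by
    refine (hexp.comp Real.tendsto_log_atTop).congr' ?_
    filter_upwards [eventually_gt_atTop 0] with t ht
    simp only [Function.comp_apply, Real.exp_log ht]
  refine tendsto_order.2 ⟨fun B hB => ?_, fun B hB => ?_⟩
  · obtain ⟨κ, hκ, h⟩ := hf.exists_logAverage_le_add hfm hfb (half_pos (sub_pos.2 hB))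
    have hκ0 : 0 < κ := zero_lt_one.trans hκ
    have hlt : ∀ᶠ u in atTop, B < f (Real.exp (κ * u)) := by
      filter_upwards [h, (hA κ hκ).eventually_const_lt (show A - (A - B) / 2 < A by linarith)]
        with u hle hgt
      linarith
    refine ((tendsto_id.atTop_div_const hκ0).eventually hlt).mono fun u hu => ?_
    rwa [id, mul_div_cancel₀ u hκ0.ne'] at hu
  · obtain ⟨κ, hκ, h⟩ := hf.exists_sub_le_logAverage hfm hfb (half_pos (sub_pos.2 hB))
    filter_upwards [h, (hA κ hκ).eventually_lt_const (show A < A + (B - A) / 2 by linarith)]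
      with u hle hlt
    linarith

theorem forall_isDixmierFunctional_iff_tendsto (hf : LogSlowlyDecreasing f) (hfm : Measurable f)
    (hfb : BddFun f) :
    (∀ ω, IsDixmierFunctional ω → ω f = A) ↔ Tendsto f atTop (nhds A) := by
  refine ⟨fun h => hf.tendsto_of_tendsto_logAverage hfm hfb fun κ hκ => ?_,
    fun h ω hω => hω.apply_eq_of_tendsto hfm hfb h⟩
  refine tendsto_logAverage_of_forall_isDixmierFunctional hfm hfb h tendsto_id ?_
  simpa only [id, sub_mul, one_mul] using tendsto_id.const_mul_atTop (sub_pos.2 hκ)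

end LogSlowlyDecreasing

section GFn

variable {μ : ℝ → ℝ} {K s t : ℝ}

theorem gFn_of_pos (ht : 0 < t) : gFn μ t = (∫ s in (0 : ℝ)..t, μ s) / Real.log (1 + t) :=
  if_pos ht

theorem monotoneOn_integral_zero (hμ0 : ∀ s : ℝ, 0 ≤ s → 0 ≤ μ s)
    (hμi : LocallyIntegrableOn μ (Set.Ici 0)) :
    MonotoneOn (fun t => ∫ x in (0 : ℝ)..t, μ x) (Set.Ici 0) := fun _ hs _ ht hst =>
  intervalIntegral.integral_mono_interval le_rfl hs hst
    ((ae_restrict_mem measurableSet_Ioc).mono fun x hx => hμ0 x hx.1.le)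
    ((intervalIntegrable_iff_integrableOn_Icc_of_le ht).2
      (hμi.integrableOn_compact_subset Set.Icc_subset_Ici_self isCompact_Icc))

theorem measurable_gFn (hμ0 : ∀ s : ℝ, 0 ≤ s → 0 ≤ μ s)
    (hμi : LocallyIntegrableOn μ (Set.Ici 0)) : Measurable (gFn μ) := by
  have hmono : Monotone fun t : ℝ => ∫ s in (0 : ℝ)..max t 0, μ s := fun a b hab =>
    monotoneOn_integral_zero hμ0 hμi (le_max_right a 0) (le_max_right b 0) (max_le_max_right 0 hab)
  have heq : gFn μ = (Set.Ioi 0).indicator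
      fun t => (∫ s in (0 : ℝ)..max t 0, μ s) / Real.log (1 + t) := by
    ext t
    by_cases ht : 0 < t
    · rw [gFn_of_pos ht, Set.indicator_of_mem (Set.mem_Ioi.2 ht), max_eq_left ht.le]
    · rw [gFn, if_neg ht, Set.indicator_of_notMem (mt Set.mem_Ioi.1 ht)]
  rw [heq]
  exact (hmono.measurable.div (Real.measurable_log.comp (measurable_const_add 1))).indicator
    measurableSet_Ioi

theorem gFn_nonneg (hμ0 : ∀ s : ℝ, 0 ≤ s → 0 ≤ μ s) (t : ℝ) : 0 ≤ gFn μ t := by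
  rw [gFn]
  split_ifs with ht
  · exact div_nonneg (intervalIntegral.integral_nonneg ht.le fun s hs => hμ0 s hs.1)
      (Real.log_nonneg (by linarith))
  · exact le_rfl

theorem gFn_le (ht : 0 < t) (hint : (∫ s in (0 : ℝ)..t, μ s) ≤ K * Real.log (1 + t)) :
    gFn μ t ≤ K :=
  (gFn_of_pos ht).trans_le ((div_le_iff₀ (Real.log_pos (by linarith))).2 hint)

theorem bddFun_gFn (hμ0 : ∀ s : ℝ, 0 ≤ s → 0 ≤ μ s)
    (hint : ∀ t : ℝ, 0 < t → (∫ s in (0 : ℝ)..t, μ s) ≤ K * Real.log (1 + t)) :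
    BddFun (gFn μ) := by
  refine ⟨|K|, fun t => ?_⟩
  rw [abs_of_nonneg (gFn_nonneg hμ0 t)]
  rcases lt_or_ge 0 t with ht | ht
  · exact (gFn_le ht (hint t ht)).trans (le_abs_self K)
  · exact (if_neg ht.not_gt).trans_le (abs_nonneg K)

theorem log_one_add_sub_log_one_add_le (hs : 0 < s) (hst : s ≤ t) :
    Real.log (1 + t) - Real.log (1 + s) ≤ Real.log t - Real.log s := by
  have ht := hs.trans_le hst
  rw [← Real.log_div (by positivity) (by positivity), ← Real.log_div ht.ne' hs.ne']
  refine Real.log_le_log (by positivity) ?_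
  rw [div_le_div_iff₀ (by positivity) hs]
  linarith

theorem gFn_sub_gFn_le (hμ0 : ∀ s : ℝ, 0 ≤ s → 0 ≤ μ s) (hμi : LocallyIntegrableOn μ (Set.Ici 0))
    (hs : 0 < s) (hst : s ≤ t) :
    gFn μ s - gFn μ t ≤ gFn μ s * (Real.log t - Real.log s) / Real.log (1 + t) := by
  have ht := hs.trans_le hst
  have hls : 0 < Real.log (1 + s) := Real.log_pos (by linarith)
  have hlt : 0 < Real.log (1 + t) := Real.log_pos (by linarith)
  have hnum : gFn μ s * Real.log (1 + s) ≤ gFn μ t * Real.log (1 + t) := by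
    rw [gFn_of_pos hs, gFn_of_pos ht, div_mul_cancel₀ _ hls.ne', div_mul_cancel₀ _ hlt.ne']
    exact monotoneOn_integral_zero hμ0 hμi hs.le ht.le hst
  rw [le_div_iff₀ hlt]
  calc (gFn μ s - gFn μ t) * Real.log (1 + t)
      ≤ gFn μ s * (Real.log (1 + t) - Real.log (1 + s)) := by linarith
    _ ≤ gFn μ s * (Real.log t - Real.log s) :=
      mul_le_mul_of_nonneg_left (log_one_add_sub_log_one_add_le hs hst) (gFn_nonneg hμ0 s)

theorem logSlowlyDecreasing_gFn (hμ0 : ∀ s : ℝ, 0 ≤ s → 0 ≤ μ s)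
    (hμi : LocallyIntegrableOn μ (Set.Ici 0))
    (hint : ∀ t : ℝ, 0 < t → (∫ s in (0 : ℝ)..t, μ s) ≤ K * Real.log (1 + t)) :
    LogSlowlyDecreasing (gFn μ) := by
  intro ε hε
  have hK : 0 ≤ K := (gFn_nonneg hμ0 1).trans (gFn_le one_pos (hint 1 one_pos))
  refine ⟨1 + ε / (K + 1), lt_add_of_pos_right 1 (by positivity), ?_⟩
  filter_upwards [eventually_gt_atTop 1] with s hs t ⟨hst, hts⟩
  have hs0 : 0 < s := one_pos.trans hs
  have ht0 : 0 < t := hs0.trans_le hst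
  have hlt : 0 < Real.log (1 + t) := Real.log_pos (by linarith)
  have hwindow : Real.log t - Real.log s ≤ ε / (K + 1) * Real.log (1 + t) := by
    have hlog := Real.log_le_log ht0 hts
    rw [Real.log_rpow hs0] at hlog
    have hst' : Real.log s ≤ Real.log (1 + t) := Real.log_le_log hs0 (by linarith)
    linarith [mul_le_mul_of_nonneg_left hst' (show 0 ≤ ε / (K + 1) by positivity)]
  have hdrop : gFn μ s * (Real.log t - Real.log s) ≤ ε * Real.log (1 + t) :=
    calc gFn μ s * (Real.log t - Real.log s)
        ≤ (K + 1) * (ε / (K + 1) * Real.log (1 + t)) :=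
          mul_le_mul ((gFn_le hs0 (hint s hs0)).trans (by linarith)) hwindow
            (sub_nonneg.2 (Real.log_le_log hs0 hst)) (by positivity)
      _ = ε * Real.log (1 + t) := by field_simp
  linarith [(gFn_sub_gFn_le hμ0 hμi hs0 hst).trans ((div_le_iff₀ hlt).2 hdrop)]

end GFn

theorem dixmier_measurable_iff_cesaro_limit_general (μ : ℝ → ℝ)
    (hμ0 : ∀ s : ℝ, 0 ≤ s → 0 ≤ μ s)
    (hμi : LocallyIntegrableOn μ (Set.Ici 0)) (K : ℝ)
    (hint : ∀ t : ℝ, 0 < t → (∫ s in (0 : ℝ)..t, μ s) ≤ K * Real.log (1 + t)) (A : ℝ) :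
    (∀ ω, IsDixmierFunctional ω → ω (gFn μ) = A) ↔ Tendsto (gFn μ) atTop (nhds A) :=
  (logSlowlyDecreasing_gFn hμ0 hμi hint).forall_isDixmierFunctional_iff_tendsto
    (measurable_gFn hμ0 hμi) (bddFun_gFn hμ0 hint)

/-- For a nonincreasing `μ : [0,∞) → [0,∞)` with `∫₀^t μ ≤ K log(1+t)` and
`g(t) = (1/log(1+t))∫₀^t μ(s) ds`, the following are equivalent: (a) `ω(g) = A` for every
positive dilation-invariant linear functional `ω` on `L∞((0,∞))` lying between the essential
liminf and limsup at `+∞`; (b) `lim_{t→∞} g(t) = A`. -/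
theorem dixmier_measurable_iff_cesaro_limit (μ : ℝ → ℝ)
    (hμ0 : ∀ s : ℝ, 0 ≤ s → 0 ≤ μ s) (hmono : AntitoneOn μ (Set.Ici 0))
    (K : ℝ) (hK : 0 < K)
    (hint : ∀ t : ℝ, 0 < t → (∫ s in (0:ℝ)..t, μ s) ≤ K * Real.log (1 + t))
    (A : ℝ) :
    (∀ ω : (ℝ → ℝ) →ₗ[ℝ] ℝ,
        -- ω is positive
        (∀ f : ℝ → ℝ, Measurable f → BddFun f →
          (∀ᵐ x ∂((volume : Measure ℝ).restrict (Set.Ioi 0)), 0 ≤ f x) → 0 ≤ ω f) →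
        -- ω lies between the essential liminf and limsup at +∞
        (∀ f : ℝ → ℝ, Measurable f → BddFun f →
          liminf f (atTop ⊓ ae ((volume : Measure ℝ).restrict (Set.Ioi 0))) ≤ ω f ∧
            ω f ≤ limsup f (atTop ⊓ ae ((volume : Measure ℝ).restrict (Set.Ioi 0)))) →
        -- ω is dilation invariant
        (∀ f : ℝ → ℝ, Measurable f → BddFun f →
          ∀ c : ℝ, 0 < c → ω (fun t => f (t / c)) = ω f) →
        ω (gFn μ) = A) ↔
      Tendsto (gFn μ) atTop (nhds A) := by
  have hμi : LocallyIntegrableOn μ (Set.Ici 0) :=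
    (locallyIntegrableOn_iff isClosed_Ici.isLocallyClosed).2 fun _ hs hsc =>
      (hmono.mono hs).integrableOn_isCompact hsc
  rw [← dixmier_measurable_iff_cesaro_limit_general μ hμ0 hμi K hint A]
  exact ⟨fun h ω hω => h ω hω.nonneg hω.liminf_le_le_limsup hω.map_dilation,
    fun h ω hnonneg hlim hdil => h ω ⟨hnonneg, hlim, hdil⟩⟩
end

section
/- Let μ : [0,∞) → [0,∞) be nonincreasing with sup_{t>0} (1/log(1+t))∫₀^t μ(s) ds < ∞, and define the bounded sequence ξ = (ξ_N)_{N≥1} by ξ_N = (1/log(1+e^N))∫₀^{e^N} μ(s) ds. Then sup{ 𝕃(ξ) : 𝕃 a Banach limit on ℓ∞ } = limsup_{t → ∞} (1/log(1+t))∫₀^t μ(s) ds. -/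
open Filter MeasureTheory

/-- The shift operator on sequences: `(T x)_k = x_{k+1}`. -/
def shiftSeq (x : ℕ → ℝ) : ℕ → ℝ := fun k => x (k + 1)

/-- A sequence is bounded (belongs to ℓ∞). -/
def BddSeq (x : ℕ → ℝ) : Prop := ∃ C : ℝ, ∀ k, |x k| ≤ C

open Topology Set

open scoped NNReal

/-!
In the variable `u = log t`, the quotient `h u = (∫₀^{e^u} μ) / log (1 + e^u)` has a nondecreasing
numerator and a Lipschitz denominator tending to infinity. A bounded quotient of this kind is slowly
decreasing: over windows of any fixed length it drops by an arbitrarily small amount. Wherever `h`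
is close to its limsup it therefore stays close along a long block of consecutive integers, and
averaging over longer and longer such blocks, with a limit along an ultrafilter, yields a Banach
limit that attains the limsup on `ξ`. No Banach limit exceeds it, because shifting makes the first
terms of a sequence irrelevant.
-/

section LimitFunctionals

variable {ι : Type*}

lemma exists_tendsto_ultrafilter_of_isBounded_range {X : Type*} [PseudoMetricSpace X]
    [ProperSpace X] (U : Ultrafilter ι) {u : ι → X} (hu : Bornology.IsBounded (range u)) :
    ∃ l, Tendsto u U (𝓝 l) := by
  have hmem : closure (range u) ∈ U.map u :=
    Filter.mem_map.2 <| univ_mem' fun i => subset_closure (mem_range_self i)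
  obtain ⟨l, -, hl⟩ := hu.isCompact_closure.ultrafilter_le_nhds (U.map u) (le_principal_iff.2 hmem)
  exact ⟨l, hl⟩

lemma exists_linearMap_tendsto {𝕜 E F : Type*} [DivisionRing 𝕜] [AddCommGroup E] [Module 𝕜 E]
    [AddCommGroup F] [Module 𝕜 F] [TopologicalSpace F] [T2Space F] [ContinuousAdd F]
    [ContinuousConstSMul 𝕜 F] (f : Filter ι) [f.NeBot] (A : ι → E →ₗ[𝕜] F) :
    ∃ L : E →ₗ[𝕜] F, ∀ x, (∃ l, Tendsto (A · x) f (𝓝 l)) → Tendsto (A · x) f (𝓝 (L x)) := by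
  have hadd {x y : E} {l l' : F} (hx : Tendsto (A · x) f (𝓝 l)) (hy : Tendsto (A · y) f (𝓝 l')) :
      Tendsto (A · (x + y)) f (𝓝 (l + l')) := by simpa only [map_add] using hx.add hy
  have hsmul (c : 𝕜) {x : E} {l : F} (hx : Tendsto (A · x) f (𝓝 l)) :
      Tendsto (A · (c • x)) f (𝓝 (c • l)) := by simpa only [map_smul] using hx.const_smul c
  let S : Submodule 𝕜 E :=
    { carrier := {x | ∃ l, Tendsto (A · x) f (𝓝 l)}
      zero_mem' := ⟨0, by simpa only [map_zero] using tendsto_const_nhds⟩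
      add_mem' := fun ⟨_, hx⟩ ⟨_, hy⟩ => ⟨_, hadd hx hy⟩
      smul_mem' := fun c _ ⟨_, hx⟩ => ⟨_, hsmul c hx⟩ }
  choose l hl using fun x : S => x.2
  let L₀ : S →ₗ[𝕜] F :=
    { toFun := l
      map_add' := fun x y => tendsto_nhds_unique (hl (x + y)) (hadd (hl x) (hl y))
      map_smul' := fun c x => tendsto_nhds_unique (hl (c • x)) (hsmul c (hl x)) }
  obtain ⟨L, hL⟩ := LinearMap.exists_extend L₀
  refine ⟨L, fun x hx => ?_⟩
  have hLx : L x = l ⟨x, hx⟩ := LinearMap.congr_fun hL ⟨x, hx⟩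
  exact hLx ▸ hl ⟨x, hx⟩

end LimitFunctionals

section WindowAverage

/-- The average of the `n` consecutive terms `x m, …, x (m + n - 1)` of a sequence, as a linear
functional of `x`. Banach limits arise as limits of such averages as `n → ∞`. It is `0` for
`n = 0`. -/
noncomputable def windowAverage (m n : ℕ) : (ℕ → ℝ) →ₗ[ℝ] ℝ :=
  (n : ℝ)⁻¹ • ∑ k ∈ Finset.range n, LinearMap.proj (m + k)

variable {m n : ℕ} {x : ℕ → ℝ} {a C : ℝ}

lemma windowAverage_apply (m n : ℕ) (x : ℕ → ℝ) :
    windowAverage m n x = (∑ k ∈ Finset.range n, x (m + k)) / n := by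
  simp [windowAverage, div_eq_inv_mul]

lemma windowAverage_const (hn : n ≠ 0) : windowAverage m n (fun _ => a) = a := by
  simp [windowAverage_apply, hn]

lemma le_windowAverage (hn : n ≠ 0) (h : ∀ k < n, a ≤ x (m + k)) : a ≤ windowAverage m n x := by
  rw [← windowAverage_const (m := m) (a := a) hn, windowAverage_apply, windowAverage_apply]
  gcongr with k hk
  exact h k (Finset.mem_range.1 hk)

lemma windowAverage_nonneg (h : ∀ k, 0 ≤ x k) : 0 ≤ windowAverage m n x := by
  rw [windowAverage_apply]
  exact div_nonneg (Finset.sum_nonneg fun k _ => h _) n.cast_nonneg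

lemma abs_windowAverage_le (h : ∀ k, |x k| ≤ C) : |windowAverage m n x| ≤ C := by
  rw [windowAverage_apply, abs_div, Nat.abs_cast]
  refine div_le_of_le_mul₀ n.cast_nonneg ((abs_nonneg _).trans (h 0)) ?_
  calc |∑ k ∈ Finset.range n, x (m + k)| ≤ ∑ k ∈ Finset.range n, |x (m + k)| :=
        Finset.abs_sum_le_sum_abs _ _
    _ ≤ ∑ _k ∈ Finset.range n, C := Finset.sum_le_sum fun k _ => h _
    _ = C * n := by rw [Finset.sum_const, Finset.card_range, nsmul_eq_mul, mul_comm]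

lemma windowAverage_shiftSeq_sub (m n : ℕ) (x : ℕ → ℝ) :
    windowAverage m n (shiftSeq x) - windowAverage m n x = (x (m + n) - x m) / n := by
  rw [windowAverage_apply, windowAverage_apply, ← sub_div, ← Finset.sum_sub_distrib]
  exact congrArg (· / (n : ℝ)) (Finset.sum_range_sub (fun k => x (m + k)) n)

lemma tendsto_windowAverage_shiftSeq_sub (hx : BddSeq x) (m : ℕ → ℕ) :
    Tendsto (fun n => windowAverage (m n) n (shiftSeq x) - windowAverage (m n) n x)
      atTop (𝓝 0) := by
  obtain ⟨C, hC⟩ := hx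
  refine squeeze_zero_norm (fun n => ?_) (tendsto_const_div_atTop_nhds_zero_nat (C + C))
  rw [windowAverage_shiftSeq_sub, norm_div, Real.norm_natCast]
  gcongr
  exact (norm_sub_le _ _).trans (add_le_add (hC _) (hC _))

end WindowAverage

section BanachLimit

variable {x : ℕ → ℝ} {L : (ℕ → ℝ) →ₗ[ℝ] ℝ} {a b : ℝ}

lemma BddSeq.shiftSeq (hx : BddSeq x) : BddSeq (shiftSeq x) :=
  hx.imp fun _ hC k => hC (k + 1)

lemma BddSeq.const_sub (hx : BddSeq x) (b : ℝ) : BddSeq fun k => b - x k :=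
  let ⟨C, hC⟩ := hx
  ⟨|b| + C, fun k => (abs_sub _ _).trans (by gcongr; exact hC k)⟩

lemma bddSeq_of_isBoundedUnder_abs (h : IsBoundedUnder (· ≤ ·) atTop fun k => |x k|) :
    BddSeq x :=
  let ⟨C, hC⟩ := h.bddAbove_range
  ⟨C, fun k => hC (mem_range_self k)⟩

/-- Banach limits on `ℓ∞`. They are encoded as functionals on all real sequences, constrained only
on the bounded ones; a functional on `ℓ∞` always extends linearly to all sequences. -/
structure IsBanachLimit_s11 (L : (ℕ → ℝ) →ₗ[ℝ] ℝ) : Prop where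
  nonneg : ∀ x, BddSeq x → (∀ k, 0 ≤ x k) → 0 ≤ L x
  map_one : L (fun _ => 1) = 1
  map_shiftSeq : ∀ x, BddSeq x → L (shiftSeq x) = L x

lemma isBanachLimit_iff :
    IsBanachLimit_s11 L ↔ (∀ x, BddSeq x → (∀ k, 0 ≤ x k) → 0 ≤ L x) ∧ L (fun _ => 1) = 1 ∧
      ∀ x, BddSeq x → L (shiftSeq x) = L x :=
  ⟨fun ⟨hnonneg, hone, hshift⟩ => ⟨hnonneg, hone, hshift⟩,
    fun ⟨hnonneg, hone, hshift⟩ => ⟨hnonneg, hone, hshift⟩⟩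

lemma IsBanachLimit_s11.map_const (hL : IsBanachLimit_s11 L) (b : ℝ) : L (fun _ => b) = b := by
  have h := map_smul L b fun _ => 1
  rwa [hL.map_one, smul_eq_mul, mul_one, show (b • fun _ : ℕ => (1 : ℝ)) = fun _ => b by
    ext; simp] at h

lemma IsBanachLimit_s11.le_of_forall_le (hL : IsBanachLimit_s11 L) (hx : BddSeq x) (h : ∀ k, x k ≤ b) :
    L x ≤ b := by
  have hnonneg : 0 ≤ L ((fun _ => b) - x) :=
    hL.nonneg _ (hx.const_sub b) fun k => sub_nonneg.2 (h k)
  rwa [map_sub, hL.map_const, sub_nonneg] at hnonneg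

lemma IsBanachLimit_s11.le_of_eventually_le (hL : IsBanachLimit_s11 L) (hx : BddSeq x)
    (h : ∀ᶠ k in atTop, x k ≤ b) : L x ≤ b := by
  obtain ⟨m, hm⟩ := eventually_atTop.1 h
  clear h
  induction m generalizing x with
  | zero => exact hL.le_of_forall_le hx fun k => hm k k.zero_le
  | succ m ih =>
    rw [← hL.map_shiftSeq x hx]
    exact ih hx.shiftSeq fun k hk => hm (k + 1) (by lia)

lemma IsBanachLimit_s11.le_limsup (hL : IsBanachLimit_s11 L) (hx : BddSeq x) : L x ≤ limsup x atTop := by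
  obtain ⟨C, hC⟩ := hx
  have hbdd : IsBoundedUnder (· ≤ ·) atTop x :=
    isBoundedUnder_of ⟨C, fun k => (le_abs_self _).trans (hC k)⟩
  exact le_of_forall_gt_imp_ge_of_dense fun b hb =>
    hL.le_of_eventually_le ⟨C, hC⟩ ((eventually_lt_of_limsup_lt hb hbdd).mono fun _ => le_of_lt)

lemma exists_isBanachLimit_tendsto_windowAverage (m : ℕ → ℕ) :
    ∃ L, IsBanachLimit_s11 L ∧ ∀ x, BddSeq x →
      Tendsto (fun n => windowAverage (m n) n x) (hyperfilter ℕ : Filter ℕ) (𝓝 (L x)) := by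
  obtain ⟨L, hL⟩ :=
    exists_linearMap_tendsto (hyperfilter ℕ : Filter ℕ) fun n => windowAverage (m n) n
  have hlim (x : ℕ → ℝ) (hx : BddSeq x) :
      Tendsto (fun n => windowAverage (m n) n x) (hyperfilter ℕ : Filter ℕ) (𝓝 (L x)) := by
    obtain ⟨C, hC⟩ := hx
    refine hL x (exists_tendsto_ultrafilter_of_isBounded_range _ ?_)
    exact isBounded_iff_forall_norm_le.2
      ⟨C, forall_mem_range.2 fun n => abs_windowAverage_le hC⟩
  refine ⟨L, ⟨fun x hx h => ?_, ?_, fun x hx => ?_⟩, hlim⟩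
  · exact ge_of_tendsto' (hlim x hx) fun n => windowAverage_nonneg h
  · refine tendsto_nhds_unique_of_eventuallyEq (hlim _ ⟨1, by simp⟩) tendsto_const_nhds ?_
    filter_upwards [Nat.hyperfilter_le_atTop (eventually_ne_atTop 0)] with n hn
    exact windowAverage_const hn
  · exact sub_eq_zero.1 <| tendsto_nhds_unique ((hlim _ hx.shiftSeq).sub (hlim x hx)) <|
      (tendsto_windowAverage_shiftSeq_sub hx m).mono_left Nat.hyperfilter_le_atTop

lemma exists_isBanachLimit_ge_of_forall_exists_window (hx : BddSeq x)
    (h : ∀ ε > 0, ∀ n : ℕ, ∃ m, ∀ k < n, a - ε ≤ x (m + k)) : ∃ L, IsBanachLimit_s11 L ∧ a ≤ L x := by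
  choose m hm using fun n : ℕ => h (1 / (n + 1)) Nat.one_div_pos_of_nat n
  obtain ⟨L, hL, hlim⟩ := exists_isBanachLimit_tendsto_windowAverage m
  have htends : Tendsto (fun n : ℕ => a - 1 / ((n : ℝ) + 1)) (hyperfilter ℕ : Filter ℕ) (𝓝 a) := by
    simpa only [sub_zero] using
      (tendsto_one_div_add_atTop_nhds_zero_nat.mono_left Nat.hyperfilter_le_atTop).const_sub a
  refine ⟨L, hL, le_of_tendsto_of_tendsto htends (hlim x hx) ?_⟩
  filter_upwards [Nat.hyperfilter_le_atTop (eventually_ne_atTop 0)] with n hn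
  exact le_windowAverage hn (hm n)

end BanachLimit

section SlowlyDecreasing

/-- Slowly decreasing functions, in the sense of Tauberian theory and in additive form: in the
limit, `h` cannot drop by a definite amount over a window of length one. By iteration the same
holds for windows of any fixed length. -/
def IsSlowlyDecreasing (h : ℝ → ℝ) : Prop :=
  ∀ ε > 0, ∀ᶠ u in atTop, ∀ v ∈ Icc u (u + 1), h u - ε ≤ h v

variable {h : ℝ → ℝ}

lemma IsSlowlyDecreasing.eventually_forall_mem_Icc (hh : IsSlowlyDecreasing h) (n : ℕ) {ε : ℝ}
    (hε : 0 < ε) : ∀ᶠ u : ℝ in atTop, ∀ v ∈ Icc u (u + n), h u - ε ≤ h v := by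
  induction n generalizing ε with
  | zero =>
    refine Eventually.of_forall fun u v hv => ?_
    obtain rfl : v = u := le_antisymm (by simpa using hv.2) hv.1
    linarith
  | succ n ih =>
    have hnext := (tendsto_atTop_add_const_right atTop (1 : ℝ) tendsto_id).eventually
      (ih (half_pos hε))
    filter_upwards [hh (ε / 2) (half_pos hε), hnext] with u hone hrest v ⟨huv, hvu⟩
    rcases le_total v (u + 1) with hv | hv
    · linarith [hone v ⟨huv, hv⟩]
    · have hfirst : h u - ε / 2 ≤ h (u + 1) := hone (u + 1) (by simp)
      have hlast : h (u + 1) - ε / 2 ≤ h v := hrest v ⟨hv, by push_cast at hvu; grind⟩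
      linarith

lemma IsSlowlyDecreasing.exists_window_ge (hh : IsSlowlyDecreasing h) {a ε : ℝ} (hε : 0 < ε)
    (ha : ∃ᶠ u in atTop, a - ε / 2 < h u) (n : ℕ) :
    ∃ m : ℕ, ∀ k < n, a - ε ≤ h ((m + k : ℕ) : ℝ) := by
  obtain ⟨u, hu, hdrop, hu0⟩ := (ha.and_eventually
    ((hh.eventually_forall_mem_Icc n (half_pos hε)).and (eventually_ge_atTop 0))).exists
  refine ⟨⌈u⌉₊, fun k hk => ?_⟩
  have hlower : u ≤ ((⌈u⌉₊ + k : ℕ) : ℝ) := (Nat.le_ceil u).trans (by simp)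
  have hupper : ((⌈u⌉₊ + k : ℕ) : ℝ) ≤ u + n := by
    have hk' : (k : ℝ) + 1 ≤ n := by exact_mod_cast hk
    push_cast
    linarith [Nat.ceil_lt_add_one hu0]
  linarith [hdrop _ ⟨hlower, hupper⟩]

theorem IsSlowlyDecreasing.isGreatest_isBanachLimit (hh : IsSlowlyDecreasing h)
    (hb : IsBoundedUnder (· ≤ ·) atTop fun u => |h u|) :
    IsGreatest {r : ℝ | ∃ L, IsBanachLimit_s11 L ∧ L (fun N : ℕ => h N) = r} (limsup h atTop) := by
  have hbdd := isBoundedUnder_le_abs.1 hb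
  have hseq : BddSeq fun N : ℕ => h N :=
    bddSeq_of_isBoundedUnder_abs (tendsto_natCast_atTop_atTop.isBoundedUnder_comp hb)
  have hupper (L : (ℕ → ℝ) →ₗ[ℝ] ℝ) (hL : IsBanachLimit_s11 L) :
      L (fun N : ℕ => h N) ≤ limsup h atTop := calc
    L (fun N : ℕ => h N) ≤ limsup (fun N : ℕ => h N) atTop := hL.le_limsup hseq
    _ = limsup h (map Nat.cast atTop) := limsup_comp h Nat.cast atTop
    _ ≤ limsup h atTop := limsup_le_limsup_of_le tendsto_natCast_atTop_atTop
      (hbdd.2.mono tendsto_natCast_atTop_atTop).isCoboundedUnder_le hbdd.1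
  obtain ⟨L, hL, hlower⟩ := exists_isBanachLimit_ge_of_forall_exists_window hseq fun ε hε =>
    hh.exists_window_ge hε <|
      frequently_lt_of_lt_limsup hbdd.2.isCoboundedUnder_le (sub_lt_self _ (half_pos hε))
  refine ⟨⟨L, hL, (hupper L hL).antisymm hlower⟩, ?_⟩
  rintro _ ⟨L', hL', rfl⟩
  exact hupper L' hL'

lemma isSlowlyDecreasing_div {F w : ℝ → ℝ} {a : ℝ} {C : ℝ≥0} (hF : MonotoneOn F (Ici a))
    (hw : LipschitzWith C w) (hw' : Tendsto w atTop atTop)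
    (hb : IsBoundedUnder (· ≤ ·) atTop fun u => |F u / w u|) :
    IsSlowlyDecreasing fun u => F u / w u := by
  intro ε hε
  obtain ⟨B, hB⟩ := hb.eventually_le
  filter_upwards [hB, eventually_ge_atTop a, hw'.eventually_gt_atTop (C : ℝ),
    hw'.eventually_ge_atTop (B * C / ε + C)] with u hBu hau hCu hwu v ⟨huv, hvu⟩
  have hdist : |w v - w u| ≤ C := by
    refine (hw.dist_le_mul v u).trans (mul_le_of_le_one_right C.2 ?_)
    rw [Real.dist_eq, abs_of_nonneg (sub_nonneg.2 huv)]
    linarith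
  have hwv : w u - C ≤ w v := by linarith [neg_le_of_abs_le hdist]
  have hwu_pos : 0 < w u := C.2.trans_lt hCu
  have hwv_pos : 0 < w v := by linarith
  have hdrop : F u / w u * (w v - w u) ≤ ε * w v := calc
    F u / w u * (w v - w u) ≤ |F u / w u| * |w v - w u| := (le_abs_self _).trans (abs_mul _ _).le
    _ ≤ B * C := by gcongr; exact (abs_nonneg _).trans hBu
    _ = B * C / ε * ε := (div_mul_cancel₀ _ hε.ne').symm
    _ ≤ w v * ε := by gcongr; linarith
    _ = ε * w v := mul_comm _ _
  calc F u / w u - ε ≤ F u / w v := by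
        rw [le_div_iff₀ hwv_pos]
        linarith [div_mul_cancel₀ (F u) hwu_pos.ne']
    _ ≤ F v / w v := by gcongr; exact hF hau (hau.trans huv) huv

end SlowlyDecreasing

section LogarithmicMeans

lemma tendsto_log_one_add_exp_atTop :
    Tendsto (fun u => Real.log (1 + Real.exp u)) atTop atTop :=
  Real.tendsto_log_atTop.comp (tendsto_atTop_add_const_left _ _ Real.tendsto_exp_atTop)

lemma lipschitzWith_one_log_one_add_exp : LipschitzWith 1 fun u => Real.log (1 + Real.exp u) := by
  refine LipschitzWith.of_le_add fun u v => ?_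
  have hexp : 1 + Real.exp u ≤ (1 + Real.exp v) * Real.exp (dist u v) := calc
    1 + Real.exp u ≤ Real.exp (dist u v) + Real.exp (v + dist u v) := by
      gcongr
      · exact Real.one_le_exp dist_nonneg
      · linarith [Real.sub_le_dist u v]
    _ = (1 + Real.exp v) * Real.exp (dist u v) := by rw [Real.exp_add]; ring
  calc Real.log (1 + Real.exp u) ≤ Real.log ((1 + Real.exp v) * Real.exp (dist u v)) := by gcongr
    _ = Real.log (1 + Real.exp v) + dist u v := by
      rw [Real.log_mul (by positivity) (Real.exp_ne_zero _), Real.log_exp]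

lemma monotoneOn_comp_exp {F : ℝ → ℝ} {a : ℝ} (hF : MonotoneOn F (Ici a)) :
    MonotoneOn (fun u => F (Real.exp u)) (Ici a) := by
  have hmaps : MapsTo Real.exp (Ici a) (Ici a) := fun u (hu : a ≤ u) =>
    hu.trans (by linarith [Real.add_one_le_exp u] : u ≤ Real.exp u)
  exact hF.comp (Real.exp_monotone.monotoneOn _) hmaps

lemma monotoneOn_intervalIntegral_of_nonneg {μ : ℝ → ℝ} {a : ℝ}
    (hμ0 : ∀ s, a ≤ s → 0 ≤ μ s) (hμ : ∀ t, a ≤ t → IntervalIntegrable μ volume a t) :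
    MonotoneOn (fun t => ∫ s in a..t, μ s) (Ici a) := fun _ ht t' ht' htt' =>
  intervalIntegral.integral_mono_interval le_rfl ht htt'
    (ae_restrict_of_forall_mem measurableSet_Ioc fun s hs => hμ0 s hs.1.le) (hμ t' ht')

lemma isBoundedUnder_abs_div_log_one_add {F : ℝ → ℝ} {K : ℝ} (hF : ∀ t, 0 < t → 0 ≤ F t)
    (hK : ∀ t, 0 < t → F t / Real.log (1 + t) ≤ K) :
    IsBoundedUnder (· ≤ ·) atTop fun t => |F t / Real.log (1 + t)| := by
  refine isBoundedUnder_of_eventually_le (a := K) ?_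
  filter_upwards [eventually_gt_atTop 0] with t ht
  rw [abs_of_nonneg (div_nonneg (hF t ht) (Real.log_nonneg (by linarith)))]
  exact hK t ht

theorem sup_banach_limits_eq_limsup_general {F : ℝ → ℝ} {a : ℝ} (hF : MonotoneOn F (Ici a))
    (hb : IsBoundedUnder (· ≤ ·) atTop fun t => |F t / Real.log (1 + t)|) :
    sSup {r : ℝ | ∃ L, IsBanachLimit_s11 L ∧
        L (fun N : ℕ => F (Real.exp N) / Real.log (1 + Real.exp N)) = r} =
      limsup (fun t => F t / Real.log (1 + t)) atTop := by
  have hb' := Real.tendsto_exp_atTop.isBoundedUnder_comp hb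
  have hslow := isSlowlyDecreasing_div (monotoneOn_comp_exp hF) lipschitzWith_one_log_one_add_exp
    tendsto_log_one_add_exp_atTop hb'
  calc
    _ = limsup ((fun t => F t / Real.log (1 + t)) ∘ Real.exp) atTop :=
      (hslow.isGreatest_isBanachLimit hb').csSup_eq
    _ = _ := by rw [limsup_comp, Real.map_exp_atTop]

end LogarithmicMeans

/-- **Norming property of Banach limits (Sucheston-type result).**
For a nonincreasing `μ : [0,∞) → [0,∞)` with `sup_{t>0} (1/log(1+t))∫₀^t μ < ∞` and the
bounded sequence `ξ_N = (1/log(1+e^N))∫₀^{e^N} μ(s) ds`, the supremum of `𝕃(ξ)` over all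
Banach limits `𝕃` equals `limsup_{t→∞} (1/log(1+t))∫₀^t μ(s) ds`. -/
theorem sup_banach_limits_eq_limsup (μ : ℝ → ℝ)
    (hμ0 : ∀ s : ℝ, 0 ≤ s → 0 ≤ μ s) (hmono : AntitoneOn μ (Set.Ici 0))
    (K : ℝ)
    (hK : ∀ t : ℝ, 0 < t → (∫ s in (0:ℝ)..t, μ s) / Real.log (1 + t) ≤ K) :
    sSup {r : ℝ | ∃ L : (ℕ → ℝ) →ₗ[ℝ] ℝ,
        -- L is positive
        (∀ x : ℕ → ℝ, BddSeq x → (∀ k, 0 ≤ x k) → 0 ≤ L x) ∧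
        -- L(𝟏) = 1
        L (fun _ => 1) = 1 ∧
        -- L is translation (shift) invariant
        (∀ x : ℕ → ℝ, BddSeq x → L (shiftSeq x) = L x) ∧
        -- r is the value of L on the sequence ξ
        L (fun N : ℕ => (∫ s in (0:ℝ)..(Real.exp N), μ s) /
            Real.log (1 + Real.exp N)) = r}
      = limsup (fun t : ℝ =>
          if 0 < t then (∫ s in (0:ℝ)..t, μ s) / Real.log (1 + t) else 0) atTop := by
  have hF : MonotoneOn (fun t => ∫ s in (0 : ℝ)..t, μ s) (Ici 0) :=
    monotoneOn_intervalIntegral_of_nonneg hμ0 fun t ht =>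
      (hmono.mono (uIcc_of_le ht ▸ Icc_subset_Ici_self)).intervalIntegrable
  have hF0 (t : ℝ) (ht : 0 < t) : 0 ≤ ∫ s in (0 : ℝ)..t, μ s :=
    intervalIntegral.integral_nonneg ht.le fun s hs => hμ0 s hs.1
  have hgeneral :=
    sup_banach_limits_eq_limsup_general hF (isBoundedUnder_abs_div_log_one_add hF0 hK)
  simp only [isBanachLimit_iff, and_assoc] at hgeneral
  exact hgeneral.trans <| limsup_congr <|
    (eventually_gt_atTop 0).mono fun t ht => (if_pos ht).symm
end
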